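/- Let n ≥ 1 and γ ∈ (0,2). There exists a constant C > 0, depending only on n and γ, such that for every Schwartz function f : ℝⁿ → ℝ and every x ∈ ℝⁿ, C · (sup_{z ∈ ℝⁿ} |f(z)|)^γ · ∫_{ℝⁿ} |∇f(x) − ∇f(x+y)|² / |y|^{n+γ} dy ≥ |∇f(x)|^{2+γ}. -/

import Mathlib

open MeasureTheory

/-- The radial majorant `min(r², 1) r^{-(n+γ)}` is integrable on `ℝⁿ`. -/
lemma cv_radial_integrable (n : ℕ) (hn : 1 ≤ n) (γ : ℝ) (hγ : γ ∈ Set.Ioo (0 : ℝ) 2) :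
    Integrable (fun y : EuclideanSpace ℝ (Fin n) =>
      min (‖y‖ ^ 2) 1 / ‖y‖ ^ ((n : ℝ) + γ)) := by
  have : Nontrivial (EuclideanSpace ℝ (Fin n)) := by
    have : Nonempty (Fin n) := ⟨⟨0, hn⟩⟩
    infer_instance
  have key := (integrable_fun_norm_addHaar (volume : Measure (EuclideanSpace ℝ (Fin n)))
    (f := fun r : ℝ => min (r ^ 2) 1 / r ^ ((n : ℝ) + γ))).2
  apply key
  have hpow : ∀ r : ℝ, 0 < r → r ^ (n - 1) = r ^ ((n : ℝ) - 1) := by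
    intro r hr
    rw [← Real.rpow_natCast, Nat.cast_sub hn, Nat.cast_one]
  rw [finrank_euclideanSpace_fin, ← Set.Ioc_union_Ioi_eq_Ioi (zero_le_one (α := ℝ))]
  apply IntegrableOn.union
  · have h1 : IntegrableOn (fun r : ℝ => r ^ (1 - γ)) (Set.Ioc 0 1) := by
      rw [← intervalIntegrable_iff_integrableOn_Ioc_of_le zero_le_one]
      exact intervalIntegral.intervalIntegrable_rpow' (by linarith [hγ.2])
    refine h1.congr_fun ?_ measurableSet_Ioc
    intro r hr
    have hr0 : 0 < r := hr.1
    have hm : min (r ^ 2) 1 = r ^ (2 : ℝ) := by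
      rw [min_eq_left (pow_le_one₀ hr0.le hr.2)]; norm_cast
    simp only [smul_eq_mul]
    rw [hm, hpow r hr0, ← Real.rpow_sub hr0, ← Real.rpow_add hr0]
    congr 1; ring
  · have h1 : IntegrableOn (fun r : ℝ => r ^ (-1 - γ)) (Set.Ioi 1) :=
      integrableOn_Ioi_rpow_of_lt (by linarith [hγ.1]) zero_lt_one
    refine h1.congr_fun ?_ measurableSet_Ioi
    intro r hr
    have hr1 : 1 < r := hr
    have hr0 : 0 < r := by linarith
    have hm : min (r ^ 2) 1 = 1 := min_eq_right (one_le_pow₀ hr1.le)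
    simp only [smul_eq_mul]
    rw [hm, hpow r hr0, one_div, ← Real.rpow_neg hr0.le, ← Real.rpow_add hr0]
    congr 1; ring

/-- Absolute convergence of the dissipation integral. -/
lemma cv_integrable (n : ℕ) (hn : 1 ≤ n) (γ : ℝ) (hγ : γ ∈ Set.Ioo (0 : ℝ) 2)
    (f : SchwartzMap (EuclideanSpace ℝ (Fin n)) ℝ) (x : EuclideanSpace ℝ (Fin n)) :
    Integrable (fun y : EuclideanSpace ℝ (Fin n) =>
      ‖fderiv ℝ f x - fderiv ℝ f (x + y)‖ ^ 2 / ‖y‖ ^ ((n : ℝ) + γ)) := by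
  set F := SchwartzMap.fderivCLM ℝ (EuclideanSpace ℝ (Fin n)) ℝ f with hF
  have hFa : ∀ z, fderiv ℝ f z = F z := fun z => rfl
  set G := SchwartzMap.fderivCLM ℝ (EuclideanSpace ℝ (Fin n)) _ F with hG
  have hGa : ∀ z, fderiv ℝ F z = G z := fun z => rfl
  obtain ⟨B, hB⟩ : ∃ B, ∀ z, ‖F z‖ ≤ B := ⟨_, SchwartzMap.norm_le_seminorm ℝ F⟩
  obtain ⟨L, hL⟩ : ∃ L, ∀ z, ‖G z‖ ≤ L := ⟨_, SchwartzMap.norm_le_seminorm ℝ G⟩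
  simp only [hFa]
  have hB0 : 0 ≤ B := (norm_nonneg _).trans (hB 0)
  have hL0 : 0 ≤ L := (norm_nonneg _).trans (hL 0)
  refine ((cv_radial_integrable n hn γ hγ).const_mul (max (L ^ 2) ((2 * B) ^ 2))).mono' ?_ ?_
  · have : Continuous F := F.continuous
    apply Measurable.aestronglyMeasurable
    apply Measurable.div
    · exact Continuous.measurable (by fun_prop)
    · exact (measurable_norm).pow_const _
  · refine Filter.Eventually.of_forall fun y => ?_
    have hp : 0 ≤ ‖y‖ ^ ((n : ℝ) + γ) := Real.rpow_nonneg (norm_nonneg _) _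
    rw [Real.norm_of_nonneg (div_nonneg (sq_nonneg _) hp), ← mul_div_assoc]
    refine div_le_div_of_nonneg_right ?_ hp
    have h1 : ‖F x - F (x + y)‖ ≤ L * ‖y‖ := by
      have := Convex.norm_image_sub_le_of_norm_fderiv_le (𝕜 := ℝ) (f := F) (s := Set.univ) (C := L)
        (x := x + y) (y := x) (fun z _ => F.differentiableAt)
        (fun z _ => hL z) convex_univ (Set.mem_univ _) (Set.mem_univ _)
      simpa using this
    have h2 : ‖F x - F (x + y)‖ ≤ 2 * B := by
      have := norm_sub_le (F x) (F (x + y))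
      linarith [hB x, hB (x + y)]
    have h1' := pow_le_pow_left₀ (norm_nonneg _) h1 2
    have h2' := pow_le_pow_left₀ (norm_nonneg _) h2 2
    rcases le_total (‖y‖ ^ 2) 1 with h | h
    · rw [min_eq_left h]
      calc _ ≤ _ := h1'
        _ = L ^ 2 * ‖y‖ ^ 2 := by ring
        _ ≤ _ := by gcongr; exact le_max_left _ _
    · rw [min_eq_right h, mul_one]
      exact h2'.trans (le_max_right _ _)

/-- The basic inequality, for a fixed test function `φ` at scale `R`. -/
lemma cv_basic (n : ℕ) (hn : 1 ≤ n) (γ : ℝ) (hγ : γ ∈ Set.Ioo (0 : ℝ) 2)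
    (φ : EuclideanSpace ℝ (Fin n) → ℝ) (hφ : ContDiff ℝ 1 φ) (hφc : HasCompactSupport φ)
    (hφ0 : ∀ y, 0 ≤ φ y)
    (f : SchwartzMap (EuclideanSpace ℝ (Fin n)) ℝ) (x v : EuclideanSpace ℝ (Fin n))
    (hv : ‖v‖ ≤ 1) (M : ℝ) (hM : ∀ z, |f z| ≤ M) (R ε : ℝ) (hR : 0 < R) (hε : 0 < ε) :
    (fderiv ℝ f x v) * (R ^ n * ∫ y, φ y) ≤
      M * (R⁻¹ * (R ^ n * ∫ y, ‖fderiv ℝ φ y‖)) +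
      (ε / 2 * (∫ y, ‖fderiv ℝ f x - fderiv ℝ f (x + y)‖ ^ 2 / ‖y‖ ^ ((n : ℝ) + γ)) +
       1 / (2 * ε) * (R ^ ((n : ℝ) + γ) * (R ^ n * ∫ y, φ y ^ 2 * ‖y‖ ^ ((n : ℝ) + γ)))) := by
  have hM0 : 0 ≤ M := (abs_nonneg _).trans (hM 0)
  have hs : (0 : ℝ) < (n : ℝ) + γ := by have := hγ.1; positivity
  have hRi : R⁻¹ ≠ 0 := inv_ne_zero hR.ne'
  have hfd : ContDiff ℝ 1 f := f.smooth 1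
  set u : EuclideanSpace ℝ (Fin n) → ℝ := fun y => φ (R⁻¹ • y) with hu
  have hu1 : ContDiff ℝ 1 u := hφ.comp (contDiff_const_smul _)
  have huc : HasCompactSupport u := hφc.comp_smul hRi
  have hu0 : ∀ y, 0 ≤ u y := fun y => hφ0 _
  have hucont : Continuous u := hu1.continuous
  have hdu : ∀ y, fderiv ℝ u y = R⁻¹ • fderiv ℝ φ (R⁻¹ • y) := by
    intro y
    rw [hu, fderiv_comp_smul]
  set g : EuclideanSpace ℝ (Fin n) → ℝ := fun y => f (x + y) with hg
  have hg1 : ContDiff ℝ 1 g := hfd.comp (contDiff_const.add contDiff_id)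
  have hdg : ∀ y, fderiv ℝ g y = fderiv ℝ f (x + y) := fun y => fderiv_comp_add_left x
  have hcf : Continuous (fderiv ℝ f) := hfd.continuous_fderiv one_ne_zero
  have hcg : Continuous (fderiv ℝ g) := hg1.continuous_fderiv one_ne_zero
  have hcu : Continuous (fderiv ℝ u) := hu1.continuous_fderiv one_ne_zero
  have hcφ : Continuous (fderiv ℝ φ) := hφ.continuous_fderiv one_ne_zero
  have hgcont : Continuous g := hg1.continuous
  have hducs : HasCompactSupport (fderiv ℝ u) := huc.fderiv (𝕜 := ℝ)
  have I1 : Integrable (fun y => fderiv ℝ u y v * g y) := by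
    apply Continuous.integrable_of_hasCompactSupport (by fun_prop)
    have h : HasCompactSupport (fun y => fderiv ℝ u y v) :=
      hducs.comp_left (g := fun L : EuclideanSpace ℝ (Fin n) →L[ℝ] ℝ => L v) rfl
    exact h.mul_right
  have I2 : Integrable (fun y => u y * fderiv ℝ g y v) := by
    apply Continuous.integrable_of_hasCompactSupport (by fun_prop)
    exact huc.mul_right
  have I3 : Integrable (fun y => u y * g y) := by
    apply Continuous.integrable_of_hasCompactSupport (by fun_prop)
    exact huc.mul_right
  have Iu : Integrable u := hucont.integrable_of_hasCompactSupport huc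
  have ibp := integral_mul_fderiv_eq_neg_fderiv_mul_of_integrable (v := v) I1 I2 I3
    (fun y _ => hu1.differentiable one_ne_zero y) (fun y _ => hg1.differentiable one_ne_zero y)
  have e0 : ∫ y, u y = R ^ n * ∫ y, φ y := by
    rw [hu, Measure.integral_comp_inv_smul_of_nonneg volume φ hR.le, finrank_euclideanSpace_fin, smul_eq_mul]
  have e1 : ∫ y, ‖fderiv ℝ u y‖ = R⁻¹ * (R ^ n * ∫ y, ‖fderiv ℝ φ y‖) := by
    simp only [hdu, norm_smul, integral_const_mul]
    rw [Measure.integral_comp_inv_smul_of_nonneg volume (fun y => ‖fderiv ℝ φ y‖) hR.le,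
      finrank_euclideanSpace_fin, smul_eq_mul, Real.norm_of_nonneg (by positivity)]
  have e2 : ∫ y, u y ^ 2 * ‖y‖ ^ ((n : ℝ) + γ) =
      R ^ ((n : ℝ) + γ) * (R ^ n * ∫ y, φ y ^ 2 * ‖y‖ ^ ((n : ℝ) + γ)) := by
    have h := Measure.integral_comp_inv_smul_of_nonneg volume
      (fun y : EuclideanSpace ℝ (Fin n) => φ y ^ 2 * ‖y‖ ^ ((n : ℝ) + γ)) hR.le
    rw [finrank_euclideanSpace_fin, smul_eq_mul] at h
    rw [← h, ← integral_const_mul]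
    congr 1
    ext y
    have : ‖y‖ = R * ‖R⁻¹ • y‖ := by
      rw [norm_smul, Real.norm_of_nonneg (by positivity)]; field_simp
    have h3 : ‖y‖ ^ ((n : ℝ) + γ) = R ^ ((n : ℝ) + γ) * ‖R⁻¹ • y‖ ^ ((n : ℝ) + γ) := by
      rw [← Real.mul_rpow hR.le (norm_nonneg _), ← this]
    rw [h3]
    simp only [hu]
    ring
  have b1 : -∫ y, fderiv ℝ u y v * g y ≤ M * ∫ y, ‖fderiv ℝ u y‖ := by
    rw [← integral_neg, ← integral_const_mul]
    refine integral_mono I1.neg ?_ ?_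
    · exact (hcu.norm.integrable_of_hasCompactSupport hducs.norm).const_mul _
    · intro y
      have h1 : |fderiv ℝ u y v| ≤ ‖fderiv ℝ u y‖ := by
        have := (fderiv ℝ u y).le_opNorm v
        rw [Real.norm_eq_abs] at this
        exact this.trans (mul_le_of_le_one_right (norm_nonneg _) hv)
      calc -(fderiv ℝ u y v * g y) ≤ |fderiv ℝ u y v * g y| := neg_le_abs _
        _ = |g y| * |fderiv ℝ u y v| := by rw [abs_mul, mul_comm]
        _ ≤ M * ‖fderiv ℝ u y‖ := mul_le_mul (hM _) h1 (abs_nonneg _) hM0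
  have hD := cv_integrable n hn γ hγ f x
  have I5 : Integrable (fun y => u y ^ 2 * ‖y‖ ^ ((n : ℝ) + γ)) := by
    apply Continuous.integrable_of_hasCompactSupport
    · exact (hucont.pow 2).mul (continuous_norm.rpow_const fun _ => Or.inr hs.le)
    · have : HasCompactSupport (fun y => u y ^ 2) := 
        huc.comp_left (g := fun t : ℝ => t ^ 2) (by simp)
      exact this.mul_right
  have b2 : ∫ y, (u y * fderiv ℝ f x v - u y * fderiv ℝ g y v) ≤
      ε / 2 * (∫ y, ‖fderiv ℝ f x - fderiv ℝ f (x + y)‖ ^ 2 / ‖y‖ ^ ((n : ℝ) + γ)) +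
       1 / (2 * ε) * ∫ y, u y ^ 2 * ‖y‖ ^ ((n : ℝ) + γ) := by
    rw [← integral_const_mul, ← integral_const_mul, ← integral_add (hD.const_mul _) (I5.const_mul _)]
    refine integral_mono ((Iu.mul_const _).sub I2) ((hD.const_mul _).add (I5.const_mul _)) ?_
    intro y
    have h1 : fderiv ℝ f x v - fderiv ℝ g y v ≤ ‖fderiv ℝ f x - fderiv ℝ f (x + y)‖ := by
      have := (fderiv ℝ f x - fderiv ℝ f (x + y)).le_opNorm v
      rw [Real.norm_eq_abs] at this
      have h3 := (le_abs_self _).trans (this.trans (mul_le_of_le_one_right (norm_nonneg _) hv))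
      rw [hdg]
      simpa using h3
    simp only
    rw [← mul_sub]
    refine (mul_le_mul_of_nonneg_left h1 (hu0 y)).trans ?_
    by_cases hy : y = 0
    · subst hy
      simp [Real.zero_rpow hs.ne']
    · have hw : 0 < ‖y‖ ^ ((n : ℝ) + γ) := Real.rpow_pos_of_pos (norm_pos_iff.2 hy) _
      generalize ‖y‖ ^ ((n : ℝ) + γ) = w at hw
      generalize ‖fderiv ℝ f x - fderiv ℝ f (x + y)‖ = d
      generalize u y = t
      have : ε / 2 * (d ^ 2 / w) + 1 / (2 * ε) * (t ^ 2 * w) - t * d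
          = (ε * d - t * w) ^ 2 / (2 * ε * w) := by
        field_simp; ring
      have h4 : 0 ≤ (ε * d - t * w) ^ 2 / (2 * ε * w) := by positivity
      linarith
  rw [integral_sub (Iu.mul_const _) I2, integral_mul_const, ibp, e0, e2] at b2
  rw [e1] at b1
  linarith

/-- **Algebraic optimisation.** -/
lemma cv_opt (n : ℕ) (γ : ℝ) (c0 c1 c2 A M D : ℝ) (h0 : 0 < c0) (h1 : 0 < c1)
    (h2 : 0 < c2) (hA : 0 < A) (hM : 0 < M)
    (H : ∀ R ε : ℝ, 0 < R → 0 < ε → A * (R ^ n * c0) ≤ M * (R⁻¹ * (R ^ n * c1)) +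
      (ε / 2 * D + 1 / (2 * ε) * (R ^ ((n : ℝ) + γ) * (R ^ n * c2)))) :
    A ^ (2 + γ) ≤ (4 * c2 / c0 ^ 2 * (2 * c1 / c0) ^ γ) * M ^ γ * D := by
  set R := 2 * c1 / c0 * M / A with hRdef
  have hR : 0 < R := by positivity
  have hRg : R ^ γ = (2 * c1 / c0) ^ γ * M ^ γ / A ^ γ := by
    rw [hRdef, Real.div_rpow (by positivity) hA.le, Real.mul_rpow (by positivity) hM.le]
  have hRγ : 0 < R ^ γ := by positivity
  have hAγ : 0 < A ^ γ := by positivity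
  have key := H R (2 * c2 * (R ^ n * R ^ γ) / (c0 * A)) hR (by positivity)
  have hMR : M * (R⁻¹ * (R ^ n * c1)) = A * (R ^ n * c0) / 2 := by
    have : M * R⁻¹ * c1 = A * c0 / 2 := by rw [hRdef]; field_simp
    linear_combination R ^ n * this
  rw [hMR, Real.rpow_add hR, Real.rpow_natCast] at key
  have hRn : 0 < R ^ n := by positivity
  have key2 : A ^ 2 * c0 ^ 2 ≤ 4 * c2 * R ^ γ * D := by
    generalize R ^ n = p at *
    generalize R ^ γ = q at *
    have e : 1 / (2 * (2 * c2 * (p * q) / (c0 * A))) * (p * q * (p * c2)) = A * (p * c0) / 4 := by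
      field_simp; ring
    rw [e] at key
    have k3 : A * (p * c0) / 4 ≤ 2 * c2 * (p * q) / (c0 * A) / 2 * D := by linarith
    have k4 := mul_le_mul_of_nonneg_left k3 (show 0 ≤ 4 * (c0 * A) / p by positivity)
    have e5 : 4 * (c0 * A) / p * (A * (p * c0) / 4) = A ^ 2 * c0 ^ 2 := by field_simp
    have e6 : 4 * (c0 * A) / p * (2 * c2 * (p * q) / (c0 * A) / 2 * D) = 4 * c2 * q * D := by
      field_simp
    linarith
  rw [hRg] at key2
  rw [Real.rpow_add hA, Real.rpow_two]
  have k := mul_le_mul_of_nonneg_left key2 (show 0 ≤ A ^ γ / c0 ^ 2 by positivity)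
  have e5 : A ^ γ / c0 ^ 2 * (A ^ 2 * c0 ^ 2) = A ^ 2 * A ^ γ := by field_simp
  have e6 : A ^ γ / c0 ^ 2 * (4 * c2 * ((2 * c1 / c0) ^ γ * M ^ γ / A ^ γ) * D) =
      (4 * c2 / c0 ^ 2 * (2 * c1 / c0) ^ γ) * M ^ γ * D := by
    field_simp
  linarith

/-- Constantin–Vicol nonlinear maximum principle lower bound:
`D_γ(∇f)(x) ≥ |∇f(x)|^{2+γ} / (C ‖f‖_∞^γ)`. -/
theorem constantin_vicol_linfty_lower_bound (n : ℕ) (hn : 1 ≤ n) (γ : ℝ)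
    (hγ : γ ∈ Set.Ioo (0 : ℝ) 2) :
    ∃ C > (0 : ℝ), ∀ (f : SchwartzMap (EuclideanSpace ℝ (Fin n)) ℝ)
      (x : EuclideanSpace ℝ (Fin n)),
      C * (⨆ z : EuclideanSpace ℝ (Fin n), |f z|) ^ γ *
          ∫ y : EuclideanSpace ℝ (Fin n),
            ‖gradient (⇑f) x - gradient (⇑f) (x + y)‖ ^ 2 / ‖y‖ ^ ((n : ℝ) + γ) ≥
        ‖gradient (⇑f) x‖ ^ (2 + γ) := by
  let φ : ContDiffBump (0 : EuclideanSpace ℝ (Fin n)) := ⟨1, 2, zero_lt_one, one_lt_two⟩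
  clear_value φ
  set c0 := ∫ y, φ y with hc0
  set c1 := (∫ y, ‖fderiv ℝ φ y‖) + 1 with hc1
  set c2 := (∫ y, φ y ^ 2 * ‖y‖ ^ ((n : ℝ) + γ)) + 1 with hc2
  have h0 : 0 < c0 := φ.integral_pos
  have h1 : 0 < c1 := by
    have : 0 ≤ ∫ y, ‖fderiv ℝ φ y‖ := integral_nonneg fun y => norm_nonneg _
    linarith
  have h2 : 0 < c2 := by
    have : 0 ≤ ∫ y, φ y ^ 2 * ‖y‖ ^ ((n : ℝ) + γ) := integral_nonneg fun y =>
      mul_nonneg (sq_nonneg _) (Real.rpow_nonneg (norm_nonneg _) _)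
    linarith
  clear_value c0 c1 c2
  refine ⟨4 * c2 / c0 ^ 2 * (2 * c1 / c0) ^ γ, by positivity, fun f x => ?_⟩
  have hD : ∀ y, ‖gradient (⇑f) x - gradient (⇑f) (x + y)‖ =
      ‖fderiv ℝ f x - fderiv ℝ f (x + y)‖ := by
    intro y
    rw [gradient, gradient, ← map_sub, LinearIsometryEquiv.norm_map]
  simp only [hD, ge_iff_le]
  have hbdd : BddAbove (Set.range fun z => |f z|) :=
    ⟨_, by rintro _ ⟨z, rfl⟩; exact SchwartzMap.norm_le_seminorm ℝ f z⟩
  have hM : ∀ z, |f z| ≤ ⨆ z, |f z| := fun z => le_ciSup hbdd z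
  set M := ⨆ z, |f z| with hMdef
  clear_value M
  have hM0 : 0 ≤ M := (abs_nonneg _).trans (hM 0)
  have hDn : 0 ≤ ∫ y, ‖fderiv ℝ f x - fderiv ℝ f (x + y)‖ ^ 2 / ‖y‖ ^ ((n : ℝ) + γ) :=
    integral_nonneg fun y => div_nonneg (sq_nonneg _) (Real.rpow_nonneg (norm_nonneg _) _)
  rcases (norm_nonneg (gradient (⇑f) x)).eq_or_lt with hA | hA
  · rw [← hA, Real.zero_rpow (by linarith [hγ.1])]
    exact mul_nonneg (by positivity) hDn
  · have hMpos : 0 < M := by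
      rcases hM0.eq_or_lt with h | h
      · exfalso
        have hf0 : (f : EuclideanSpace ℝ (Fin n) → ℝ) = fun _ => 0 := by
          ext z
          have := hM z
          rw [← h] at this
          exact abs_nonpos_iff.1 this
        rw [hf0] at hA
        simp [gradient] at hA
      · exact h
    apply cv_opt n γ c0 c1 c2 _ M _ h0 h1 h2 hA hMpos
    intro R ε hR hε
    set v := ‖gradient (⇑f) x‖⁻¹ • gradient (⇑f) x with hvdef
    have hv : ‖v‖ ≤ 1 := by
      rw [hvdef, norm_smul, norm_inv, norm_norm, inv_mul_cancel₀ hA.ne']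
    have hfv : fderiv ℝ f x v = ‖gradient (⇑f) x‖ := by
      have : fderiv ℝ f x v = inner ℝ (gradient (⇑f) x) v := by
        rw [gradient, InnerProductSpace.toDual_symm_apply]
      rw [this, hvdef, inner_smul_right, real_inner_self_eq_norm_sq]
      field_simp
    have hb := cv_basic n hn γ hγ φ φ.contDiff φ.hasCompactSupport (fun y => φ.nonneg) f x v hv M hM
      R ε hR hε
    rw [hfv, ← hc0] at hb
    refine hb.trans ?_
    gcongr
    · rw [hc1]; linarith
    · rw [hc2]; linarith
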